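/- Fix z ∈ (0, 1/8), q ∈ [1/2, 1), and β ∈ (1/2, 1). For each integer d ≥ 2, let g ∈ ℝ^d be a unit vector, let s_d ∈ [0,1) be the unique value with P[⟨g, u⟩ ≥ −s_d] = q for u uniform on S^{d-1}, let n_d = ⌈d^{3z}⌉, let u₁, …, u_{n_d} be i.i.d. uniform on S^{d-1}, set φ̂_d(u) = (1-β)·1{⟨g,u⟩ > −s_d} − β·1{⟨g,u⟩ ≤ −s_d}, Ĝ_d = (1/n_d)·Σ_{i=1}^{n_d} φ̂_d(uᵢ)uᵢ, μ_d = E[⟨g, Ĝ_d⟩ / ‖Ĝ_d‖], and J_d = √(n_d)·E[φ̂_d(u₁)·⟨g,u₁⟩] / √(E[φ̂_d(u₁)²]). Then there exist a constant K > 0 and an integer D₀ such that for all d ≥ D₀, |μ_d / J_d − 1| ≤ K·d^{−z}. -/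

import Mathlib

/-!
Write `S = ∑ φ̂(uᵢ) uᵢ`, so that the cosine is `⟪g, S⟫ / ‖S‖`. Since `‖u‖ = 1`, the diagonal part
of `‖S‖²` is `D = ∑ φ̂(uᵢ)²`, which is at least a constant times `n` and concentrates around its
mean by independence. The off-diagonal part `T = ‖S‖² - D` is small because `u` has covariance
`1 / d` in every direction: `E T² = O(n³ / d)`. Together with `E ⟪g, S⟫² = O(n² / d)`,
Cauchy–Schwarz lets one replace `‖S‖` by `√(E D)` at a cost of `O(1 / √d + n / d)`, and the
result of the replacement is exactly `J_d`.

The error is relative because `J_d` is at least of order `√(n / d)`. Indeed `E [φ̂(u) ⟪g, u⟫]` is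
the integral of `-⟪g, u⟫` over the cap `{-⟪g, u⟫ ≥ s}`, of measure at least `1 - q`, and this
controls a fixed fraction of `E |⟪g, u⟫|`, which is of order `1 / √d` by the second and fourth
moments. The relative error is therefore `O(1 / √n + √(n / d))`, and `n = ⌈d ^ (3z)⌉` gives
`O(d ^ (-z))` as long as `z ≤ 1 / 5`.
-/

open MeasureTheory Metric Set Real
open scoped RealInnerProductSpace

/-- The uniform (normalized rotation-invariant) probability measure on the unit
sphere `S^{d-1} ⊂ ℝ^d`. -/
noncomputable def sphereUniform (d : ℕ) :
    Measure (sphere (0 : EuclideanSpace ℝ (Fin d)) 1) :=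
  ((volume : Measure (EuclideanSpace ℝ (Fin d))).toSphere univ)⁻¹ •
    (volume : Measure (EuclideanSpace ℝ (Fin d))).toSphere

/-- The AGREST sampling weight function
`φ̂(u) = (1-β)·1{⟨g,u⟩ > -s} − β·1{⟨g,u⟩ ≤ -s}`. -/
noncomputable def phiHat (d : ℕ) (g : EuclideanSpace ℝ (Fin d)) (s β : ℝ)
    (u : sphere (0 : EuclideanSpace ℝ (Fin d)) 1) : ℝ :=
  if -s < ⟪g, (u : EuclideanSpace ℝ (Fin d))⟫ then 1 - β else -β

/-- The AGREST estimator `Ĝ = (1/n)·Σᵢ φ̂(uᵢ)·uᵢ`. -/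
noncomputable def Ghat (d n : ℕ) (g : EuclideanSpace ℝ (Fin d)) (s β : ℝ)
    (ω : Fin n → (sphere (0 : EuclideanSpace ℝ (Fin d)) 1)) :
    EuclideanSpace ℝ (Fin d) :=
  (1 / (n : ℝ)) • ∑ i, phiHat d g s β (ω i) • ((ω i : EuclideanSpace ℝ (Fin d)))

open ProbabilityTheory

section SecondMoments

variable {Ω ι E : Type*} [MeasurableSpace Ω] {P : Measure Ω} [NormedAddCommGroup E]
  [InnerProductSpace ℝ E] {v : ℝ}

lemma norm_sum_sq_sub_sum_norm_sq [DecidableEq ι] (s : Finset ι) (x : ι → E) :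
    ‖∑ i ∈ s, x i‖ ^ 2 - ∑ i ∈ s, ‖x i‖ ^ 2 = ∑ i ∈ s, ⟪∑ j ∈ s.erase i, x j, x i⟫ := by
  rw [← real_inner_self_eq_norm_sq, inner_sum, ← Finset.sum_sub_distrib]
  refine Finset.sum_congr rfl fun i hi ↦ ?_
  rw [← Finset.add_sum_erase s x hi, inner_add_left, real_inner_self_eq_norm_sq]
  ring

lemma integral_inner_sum_sq_le {X : ι → Ω → E} (hX : ∀ i, MemLp (X i) 2 P)
    (hcov : ∀ i w, ∫ ω, ⟪w, X i ω⟫ ^ 2 ∂P ≤ v * ‖w‖ ^ 2) (s : Finset ι) (w : E) :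
    ∫ ω, ⟪w, ∑ i ∈ s, X i ω⟫ ^ 2 ∂P ≤ s.card ^ 2 * (v * ‖w‖ ^ 2) := by
  have hint : ∀ i, Integrable (fun ω ↦ ⟪w, X i ω⟫ ^ 2) P := fun i ↦
    ((hX i).const_inner w).integrable_sq
  calc ∫ ω, ⟪w, ∑ i ∈ s, X i ω⟫ ^ 2 ∂P
      ≤ ∫ ω, s.card * ∑ i ∈ s, ⟪w, X i ω⟫ ^ 2 ∂P := by
        refine integral_mono_of_nonneg (.of_forall fun ω ↦ sq_nonneg _)
          ((integrable_finsetSum _ fun i _ ↦ hint i).const_mul _) (.of_forall fun ω ↦ ?_)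
        simp only [inner_sum]
        exact sq_sum_le_card_mul_sum_sq
    _ = s.card * ∑ i ∈ s, ∫ ω, ⟪w, X i ω⟫ ^ 2 ∂P := by
        rw [integral_const_mul, integral_finsetSum _ fun i _ ↦ hint i]
    _ ≤ s.card * ∑ _i ∈ s, v * ‖w‖ ^ 2 := by gcongr; exact hcov _ w
    _ = s.card ^ 2 * (v * ‖w‖ ^ 2) := by
        rw [Finset.sum_const, nsmul_eq_mul]
        ring

lemma integrable_inner_sq_of_indepFun [MeasurableSpace E] [BorelSpace E] {W X : Ω → E}
    (hW : MemLp W 2 P) (hX : MemLp X 2 P) (hWX : W ⟂ᵢ[P] X) :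
    Integrable (fun ω ↦ ⟪W ω, X ω⟫ ^ 2) P := by
  have hsq : Measurable fun x : E ↦ ‖x‖ ^ 2 := by fun_prop
  have hprod : Integrable (fun ω ↦ ‖W ω‖ ^ 2 * ‖X ω‖ ^ 2) P :=
    (hWX.comp hsq hsq).integrable_mul (hW.integrable_norm_pow two_ne_zero)
      (hX.integrable_norm_pow two_ne_zero)
  refine hprod.mono' ((hW.1.inner hX.1).pow 2) (.of_forall fun ω ↦ ?_)
  rw [norm_of_nonneg (sq_nonneg _), ← sq_abs, ← mul_pow]
  gcongr
  exact abs_real_inner_le_norm _ _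

variable [IsProbabilityMeasure P]

lemma sq_integral_le_integral_sq {f : Ω → ℝ} (hf : MemLp f 2 P) :
    (∫ ω, f ω ∂P) ^ 2 ≤ ∫ ω, f ω ^ 2 ∂P := by
  have h := variance_nonneg f P
  rw [variance_eq_sub hf] at h
  simpa using h

lemma norm_sq_integral_le_of_integral_inner_sq_le [CompleteSpace E] {X : Ω → E} (hX : MemLp X 2 P)
    (hv : 0 ≤ v) (hcov : ∀ w, ∫ ω, ⟪w, X ω⟫ ^ 2 ∂P ≤ v * ‖w‖ ^ 2) :
    ‖∫ ω, X ω ∂P‖ ^ 2 ≤ v := by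
  set m := ∫ ω, X ω ∂P with hm
  have h : (‖m‖ ^ 2) ^ 2 ≤ v * ‖m‖ ^ 2 := by
    calc (‖m‖ ^ 2) ^ 2 = (∫ ω, ⟪m, X ω⟫ ∂P) ^ 2 := by
          rw [integral_inner (hX.integrable one_le_two), ← hm, real_inner_self_eq_norm_sq]
      _ ≤ ∫ ω, ⟪m, X ω⟫ ^ 2 ∂P := sq_integral_le_integral_sq (hX.const_inner m)
      _ ≤ v * ‖m‖ ^ 2 := hcov m
  rcases (sq_nonneg ‖m‖).eq_or_lt with h0 | h0
  · rwa [← h0]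
  · rw [sq] at h
    exact le_of_mul_le_mul_right h h0

variable [MeasurableSpace E] [BorelSpace E]

lemma integral_inner_sq_le_of_indepFun [SecondCountableTopology E] {W X : Ω → E}
    (hW : MemLp W 2 P) (hX : MemLp X 2 P) (hWX : W ⟂ᵢ[P] X)
    (hcov : ∀ w, ∫ ω, ⟪w, X ω⟫ ^ 2 ∂P ≤ v * ‖w‖ ^ 2) :
    ∫ ω, ⟪W ω, X ω⟫ ^ 2 ∂P ≤ v * ∫ ω, ‖W ω‖ ^ 2 ∂P := by
  have hWm := hW.1.aemeasurable
  have hXm := hX.1.aemeasurable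
  have hinner : Continuous fun p : E × E ↦ ⟪p.1, p.2⟫ ^ 2 := by fun_prop
  have hlaw := hWX.map_prod_eq_prod_map_map hWm hXm
  have hint : Integrable (fun p : E × E ↦ ⟪p.1, p.2⟫ ^ 2) ((P.map W).prod (P.map X)) := by
    rw [← hlaw, integrable_map_measure hinner.aestronglyMeasurable (hWm.prodMk hXm)]
    exact integrable_inner_sq_of_indepFun hW hX hWX
  have hnorm : Integrable (fun w ↦ ‖w‖ ^ 2) (P.map W) :=
    (integrable_map_measure (by fun_prop) hWm).2 (hW.integrable_norm_pow two_ne_zero)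
  calc ∫ ω, ⟪W ω, X ω⟫ ^ 2 ∂P
      = ∫ p, ⟪p.1, p.2⟫ ^ 2 ∂(P.map W).prod (P.map X) := by
        rw [← hlaw, integral_map (hWm.prodMk hXm) hinner.aestronglyMeasurable]
    _ = ∫ w, ∫ x, ⟪w, x⟫ ^ 2 ∂P.map X ∂P.map W := integral_prod _ hint
    _ ≤ ∫ w, v * ‖w‖ ^ 2 ∂P.map W := by
        refine integral_mono hint.integral_prod_left (hnorm.const_mul v) fun w ↦ ?_
        rw [integral_map hXm (by fun_prop)]
        exact hcov w
    _ = v * ∫ ω, ‖W ω‖ ^ 2 ∂P := by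
        rw [integral_const_mul, integral_map hWm (by fun_prop)]

variable [CompleteSpace E]

lemma integral_inner_le_of_indepFun {X Y : Ω → E} (hX : MemLp X 2 P) (hY : MemLp Y 2 P)
    (hXY : X ⟂ᵢ[P] Y) (hv : 0 ≤ v) (hcovX : ∀ w, ∫ ω, ⟪w, X ω⟫ ^ 2 ∂P ≤ v * ‖w‖ ^ 2)
    (hcovY : ∀ w, ∫ ω, ⟪w, Y ω⟫ ^ 2 ∂P ≤ v * ‖w‖ ^ 2) :
    ∫ ω, ⟪X ω, Y ω⟫ ∂P ≤ v := by
  have hXm := norm_sq_integral_le_of_integral_inner_sq_le hX hv hcovX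
  have hYm := norm_sq_integral_le_of_integral_inner_sq_le hY hv hcovY
  calc ∫ ω, ⟪X ω, Y ω⟫ ∂P
      = ⟪∫ ω, X ω ∂P, ∫ ω, Y ω ∂P⟫ :=
        hXY.integral_bilin (hX.integrable one_le_two) (hY.integrable one_le_two) (innerSL ℝ)
    _ ≤ ‖∫ ω, X ω ∂P‖ * ‖∫ ω, Y ω ∂P‖ := real_inner_le_norm _ _
    _ ≤ v := by nlinarith [sq_nonneg (‖∫ ω, X ω ∂P‖ - ‖∫ ω, Y ω ∂P‖)]

lemma integral_norm_sum_sq_le {X : ι → Ω → E} {c : ℝ} (hX : ∀ i, MemLp (X i) 2 P)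
    (hindep : Pairwise fun i j ↦ X i ⟂ᵢ[P] X j) (hv : 0 ≤ v)
    (hcov : ∀ i w, ∫ ω, ⟪w, X i ω⟫ ^ 2 ∂P ≤ v * ‖w‖ ^ 2)
    (hnorm : ∀ i, ∫ ω, ‖X i ω‖ ^ 2 ∂P ≤ c) (s : Finset ι) :
    ∫ ω, ‖∑ i ∈ s, X i ω‖ ^ 2 ∂P ≤ s.card * c + s.card ^ 2 * v := by
  classical
  have hint : ∀ i j, Integrable (fun ω ↦ ⟪X i ω, X j ω⟫) P := fun i j ↦
    memLp_one_iff_integrable.1 ((innerSL ℝ).memLp_of_bilin 1 (hX i) (hX j))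
  have hterm : ∀ i j, ∫ ω, ⟪X i ω, X j ω⟫ ∂P ≤ v + if i = j then c else 0 := by
    intro i j
    split_ifs with hij
    · subst hij
      simp only [real_inner_self_eq_norm_sq]
      linarith [hnorm i]
    · simpa using integral_inner_le_of_indepFun (hX i) (hX j) (hindep hij) hv (hcov i) (hcov j)
  calc ∫ ω, ‖∑ i ∈ s, X i ω‖ ^ 2 ∂P
      = ∑ i ∈ s, ∑ j ∈ s, ∫ ω, ⟪X i ω, X j ω⟫ ∂P := by
        simp only [← real_inner_self_eq_norm_sq, sum_inner]
        simp only [inner_sum]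
        rw [integral_finsetSum _ fun i _ ↦ integrable_finsetSum _ fun j _ ↦ hint i j]
        exact Finset.sum_congr rfl fun i _ ↦ integral_finsetSum _ fun j _ ↦ hint i j
    _ ≤ ∑ i ∈ s, ∑ j ∈ s, (v + if i = j then c else 0) := by gcongr; exact hterm _ _
    _ = s.card * c + s.card ^ 2 * v := by
        simp [Finset.sum_add_distrib, Finset.sum_ite_eq]
        ring

variable [SecondCountableTopology E]

lemma integral_norm_sum_sq_sub_sum_norm_sq_sq_le {X : ι → Ω → E} {c : ℝ}
    (hmeas : ∀ i, Measurable (X i)) (hX : ∀ i, MemLp (X i) 2 P) (hindep : iIndepFun X P)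
    (hv : 0 ≤ v) (hcov : ∀ i w, ∫ ω, ⟪w, X i ω⟫ ^ 2 ∂P ≤ v * ‖w‖ ^ 2)
    (hnorm : ∀ i, ∫ ω, ‖X i ω‖ ^ 2 ∂P ≤ c) (hc : 0 ≤ c) (s : Finset ι) :
    ∫ ω, (‖∑ i ∈ s, X i ω‖ ^ 2 - ∑ i ∈ s, ‖X i ω‖ ^ 2) ^ 2 ∂P ≤
      s.card ^ 2 * (v * (s.card * c + s.card ^ 2 * v)) := by
  classical
  let W : ι → Ω → E := fun i ω ↦ ∑ j ∈ s.erase i, X j ω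
  have hW : ∀ i, MemLp (W i) 2 P := fun i ↦ memLp_finsetSum _ fun j _ ↦ hX j
  have hWX : ∀ i, W i ⟂ᵢ[P] X i := fun i ↦ by
    simpa [W, Finset.sum_fn] using hindep.indepFun_finsetSum_of_notMem hmeas (s.notMem_erase i)
  have hint : ∀ i, Integrable (fun ω ↦ ⟪W i ω, X i ω⟫ ^ 2) P := fun i ↦
    integrable_inner_sq_of_indepFun (hW i) (hX i) (hWX i)
  have hterm : ∀ i, ∫ ω, ⟪W i ω, X i ω⟫ ^ 2 ∂P ≤ v * (s.card * c + s.card ^ 2 * v) := fun i ↦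
    calc ∫ ω, ⟪W i ω, X i ω⟫ ^ 2 ∂P
        ≤ v * ∫ ω, ‖W i ω‖ ^ 2 ∂P := integral_inner_sq_le_of_indepFun (hW i) (hX i) (hWX i) (hcov i)
      _ ≤ v * ((s.erase i).card * c + (s.erase i).card ^ 2 * v) := by
          gcongr
          exact integral_norm_sum_sq_le hX (fun _ _ h ↦ hindep.indepFun h) hv hcov hnorm _
      _ ≤ v * (s.card * c + s.card ^ 2 * v) := by
          gcongr <;> exact Finset.erase_subset i s
  calc ∫ ω, (‖∑ i ∈ s, X i ω‖ ^ 2 - ∑ i ∈ s, ‖X i ω‖ ^ 2) ^ 2 ∂P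
      ≤ ∫ ω, s.card * ∑ i ∈ s, ⟪W i ω, X i ω⟫ ^ 2 ∂P := by
        refine integral_mono_of_nonneg (.of_forall fun ω ↦ sq_nonneg _)
          ((integrable_finsetSum _ fun i _ ↦ hint i).const_mul _) (.of_forall fun ω ↦ ?_)
        simp only [norm_sum_sq_sub_sum_norm_sq]
        exact sq_sum_le_card_mul_sum_sq
    _ = s.card * ∑ i ∈ s, ∫ ω, ⟪W i ω, X i ω⟫ ^ 2 ∂P := by
        rw [integral_const_mul, integral_finsetSum _ fun i _ ↦ hint i]
    _ ≤ s.card * ∑ _i ∈ s, v * (s.card * c + s.card ^ 2 * v) := by gcongr; exact hterm _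
    _ = s.card ^ 2 * (v * (s.card * c + s.card ^ 2 * v)) := by
        rw [Finset.sum_const, nsmul_eq_mul]
        ring

end SecondMoments

section Ratio

variable {N Z D w r : ℝ}

lemma abs_div_sub_div_le_of_half_le (hr : 0 < r) (hw : r ≤ w) (hZ : r / 2 ≤ Z) :
    |N / Z - N / w| ≤ 2 / r ^ 3 * (|N * (Z ^ 2 - D)| + |N * (D - w ^ 2)|) := by
  have hw0 : 0 < w := hr.trans_le hw
  have hZ0 : 0 < Z := (half_pos hr).trans_le hZ
  have hden : r ^ 3 / 2 ≤ Z * w * (w + Z) :=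
    calc r ^ 3 / 2 = r / 2 * r * (r + 0) := by ring
      _ ≤ Z * w * (w + Z) := by gcongr
  have hnum : |N * (w ^ 2 - Z ^ 2)| ≤ |N * (Z ^ 2 - D)| + |N * (D - w ^ 2)| :=
    calc |N * (w ^ 2 - Z ^ 2)| = |N * (Z ^ 2 - D) + N * (D - w ^ 2)| := by
          rw [← abs_neg]
          congr 1
          ring
      _ ≤ _ := abs_add_le _ _
  calc |N / Z - N / w| = |N * (w ^ 2 - Z ^ 2)| / (Z * w * (w + Z)) := by
        rw [← abs_of_pos (show 0 < Z * w * (w + Z) by positivity), ← abs_div]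
        congr 1
        field_simp
        ring
    _ ≤ (|N * (Z ^ 2 - D)| + |N * (D - w ^ 2)|) / (r ^ 3 / 2) := by gcongr
    _ = 2 / r ^ 3 * (|N * (Z ^ 2 - D)| + |N * (D - w ^ 2)|) := by field_simp

lemma abs_div_sub_div_le_of_le_abs (hr : 0 < r) (hw : r ≤ w) (hN : |N| ≤ Z)
    (hT : r ^ 2 / 2 ≤ |Z ^ 2 - D|) :
    |N / Z - N / w| ≤ 2 / r ^ 3 * |N * (Z ^ 2 - D)| + 4 / r ^ 4 * (Z ^ 2 - D) ^ 2 := by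
  have hw0 : 0 < w := hr.trans_le hw
  have hZ0 : 0 ≤ Z := (abs_nonneg N).trans hN
  have hNZ : |N / Z| ≤ 4 / r ^ 4 * (Z ^ 2 - D) ^ 2 :=
    calc |N / Z| ≤ 1 := by
          rw [abs_div, abs_of_nonneg hZ0]
          exact div_le_one_of_le₀ hN hZ0
      _ = 4 / r ^ 4 * (r ^ 2 / 2) ^ 2 := by field_simp; norm_num
      _ ≤ 4 / r ^ 4 * |Z ^ 2 - D| ^ 2 := by gcongr
      _ = 4 / r ^ 4 * (Z ^ 2 - D) ^ 2 := by rw [sq_abs]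
  have hNw : |N / w| ≤ 2 / r ^ 3 * |N * (Z ^ 2 - D)| :=
    calc |N / w| = |N| / w := by rw [abs_div, abs_of_pos hw0]
      _ ≤ |N| / r := by gcongr
      _ = 2 / r ^ 3 * (|N| * (r ^ 2 / 2)) := by field_simp
      _ ≤ 2 / r ^ 3 * (|N| * |Z ^ 2 - D|) := by gcongr
      _ = 2 / r ^ 3 * |N * (Z ^ 2 - D)| := by rw [abs_mul]
  linarith [abs_sub (N / Z) (N / w)]

-- If `|Z ^ 2 - D| ≤ r ^ 2 / 2`, then `Z` is bounded below and `1 / Z - 1 / w` can be expanded;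
-- otherwise `|N / Z| ≤ 1` is absorbed by the term in `(Z ^ 2 - D) ^ 2`.
lemma abs_div_sub_div_le (hr : 0 < r) (hw : r ≤ w) (hD : r ^ 2 ≤ D) (hN : |N| ≤ Z) :
    |N / Z - N / w| ≤
      2 / r ^ 3 * (|N * (Z ^ 2 - D)| + |N * (D - w ^ 2)|) + 4 / r ^ 4 * (Z ^ 2 - D) ^ 2 := by
  rcases le_total |Z ^ 2 - D| (r ^ 2 / 2) with hT | hT
  · have hZ : r / 2 ≤ Z := by
      refine (sq_le_sq₀ (by positivity) ((abs_nonneg N).trans hN)).1 ?_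
      linarith [neg_le_of_abs_le hT, sq_nonneg r]
    exact (abs_div_sub_div_le_of_half_le hr hw hZ).trans (le_add_of_nonneg_right (by positivity))
  · refine (abs_div_sub_div_le_of_le_abs hr hw hN hT).trans ?_
    gcongr
    exact le_add_of_nonneg_right (abs_nonneg _)

variable {Ω : Type*} [MeasurableSpace Ω] {P : Measure Ω}

lemma integral_abs_mul_le_of_integral_sq_le {f g : Ω → ℝ} {a b : ℝ} (hf : MemLp f 2 P)
    (hg : MemLp g 2 P) (ha : 0 ≤ a) (hb : 0 ≤ b) (hfa : ∫ ω, f ω ^ 2 ∂P ≤ a ^ 2)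
    (hgb : ∫ ω, g ω ^ 2 ∂P ≤ b ^ 2) : ∫ ω, |f ω * g ω| ∂P ≤ a * b := by
  have h := integral_mul_norm_le_Lp_mul_Lq (μ := P) (f := f) (g := g) (p := 2) (q := 2)
    (by constructor <;> norm_num) (by simpa using hf) (by simpa using hg)
  calc ∫ ω, |f ω * g ω| ∂P ≤ √(∫ ω, f ω ^ 2 ∂P) * √(∫ ω, g ω ^ 2 ∂P) := by
        simpa [abs_mul, sqrt_eq_rpow] using h
    _ ≤ a * b := by gcongr <;> exact sqrt_le_iff.2 ⟨‹_›, ‹_›⟩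

lemma abs_integral_div_sub_integral_div_le [IsProbabilityMeasure P] {N Z D : Ω → ℝ}
    {r w α τ δ : ℝ} (hr : 0 < r) (hw : r ≤ w)
    (hD : ∀ ω, r ^ 2 ≤ D ω) (hNZ : ∀ ω, |N ω| ≤ Z ω) (hZmeas : AEStronglyMeasurable Z P)
    (hN : MemLp N 2 P) (hT : MemLp (fun ω ↦ Z ω ^ 2 - D ω) 2 P)
    (hV : MemLp (fun ω ↦ D ω - w ^ 2) 2 P) (hα : 0 ≤ α) (hτ : 0 ≤ τ) (hδ : 0 ≤ δ)
    (hNα : ∫ ω, N ω ^ 2 ∂P ≤ α ^ 2) (hTτ : ∫ ω, (Z ω ^ 2 - D ω) ^ 2 ∂P ≤ τ ^ 2)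
    (hVδ : ∫ ω, (D ω - w ^ 2) ^ 2 ∂P ≤ δ ^ 2) :
    |∫ ω, N ω / Z ω ∂P - (∫ ω, N ω ∂P) / w| ≤
      2 / r ^ 3 * (α * τ + α * δ) + 4 / r ^ 4 * τ ^ 2 := by
  have hratio : Integrable (fun ω ↦ N ω / Z ω) P := by
    refine .of_bound (hN.1.div₀ hZmeas) 1 (.of_forall fun ω ↦ ?_)
    have hZ0 : 0 ≤ Z ω := (abs_nonneg _).trans (hNZ ω)
    rw [norm_eq_abs, abs_div, abs_of_nonneg hZ0]
    exact div_le_one_of_le₀ (hNZ ω) hZ0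
  have hNw : Integrable (fun ω ↦ N ω / w) P := (hN.integrable one_le_two).div_const w
  have hNT : Integrable (fun ω ↦ |N ω * (Z ω ^ 2 - D ω)|) P := (hN.integrable_mul hT).abs
  have hNV : Integrable (fun ω ↦ |N ω * (D ω - w ^ 2)|) P := (hN.integrable_mul hV).abs
  have hsum : Integrable (fun ω ↦ |N ω * (Z ω ^ 2 - D ω)| + |N ω * (D ω - w ^ 2)|) P := hNT.add hNV
  calc |∫ ω, N ω / Z ω ∂P - (∫ ω, N ω ∂P) / w|
      = |∫ ω, (N ω / Z ω - N ω / w) ∂P| := by rw [integral_sub hratio hNw, integral_div]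
    _ ≤ ∫ ω, |N ω / Z ω - N ω / w| ∂P := abs_integral_le_integral_abs
    _ ≤ ∫ ω, (2 / r ^ 3 * (|N ω * (Z ω ^ 2 - D ω)| + |N ω * (D ω - w ^ 2)|) +
          4 / r ^ 4 * (Z ω ^ 2 - D ω) ^ 2) ∂P :=
        integral_mono (hratio.sub hNw).abs
          ((hsum.const_mul _).add (hT.integrable_sq.const_mul _))
          fun ω ↦ abs_div_sub_div_le hr hw (hD ω) (hNZ ω)
    _ = 2 / r ^ 3 * (∫ ω, |N ω * (Z ω ^ 2 - D ω)| ∂P + ∫ ω, |N ω * (D ω - w ^ 2)| ∂P) +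
          4 / r ^ 4 * ∫ ω, (Z ω ^ 2 - D ω) ^ 2 ∂P := by
        rw [integral_add (hsum.const_mul _) (hT.integrable_sq.const_mul _),
          integral_const_mul, integral_const_mul, integral_add hNT hNV]
    _ ≤ 2 / r ^ 3 * (α * τ + α * δ) + 4 / r ^ 4 * τ ^ 2 := by
        gcongr
        · exact integral_abs_mul_le_of_integral_sq_le hN hT hα hτ hNα hTτ
        · exact integral_abs_mul_le_of_integral_sq_le hN hV hα hδ hNα hVδ

end Ratio

section ExpectedCosine

variable {Ω ι E : Type*} [MeasurableSpace Ω] {P : Measure Ω} [IsProbabilityMeasure P]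

lemma variance_sum_le_of_mem_Icc {Y : ι → Ω → ℝ} {a b : ℝ} (hmeas : ∀ i, AEMeasurable (Y i) P)
    (hindep : Pairwise fun i j ↦ Y i ⟂ᵢ[P] Y j) (hY : ∀ i ω, Y i ω ∈ Icc a b) (s : Finset ι) :
    Var[∑ i ∈ s, Y i; P] ≤ s.card * ((b - a) / 2) ^ 2 := by
  rw [IndepFun.variance_sum (fun i _ ↦ memLp_of_bounded (.of_forall (hY i))
    (hmeas i).aestronglyMeasurable 2) (hindep.set_pairwise _), ← nsmul_eq_mul]
  exact Finset.sum_le_card_nsmul _ _ _ fun i _ ↦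
    variance_le_sq_of_bounded (.of_forall (hY i)) (hmeas i)

variable [NormedAddCommGroup E] [MeasurableSpace E] [BorelSpace E]

lemma integral_sum_norm_sq_sub_integral_sq_le {X : ι → Ω → E} {b : ℝ}
    (hmeas : ∀ i, Measurable (X i)) (hindep : Pairwise fun i j ↦ X i ⟂ᵢ[P] X j)
    (hnorm : ∀ i ω, ‖X i ω‖ ≤ b) (s : Finset ι) :
    ∫ ω, (∑ i ∈ s, ‖X i ω‖ ^ 2 - ∫ ω', ∑ i ∈ s, ‖X i ω'‖ ^ 2 ∂P) ^ 2 ∂P ≤ s.card * b ^ 4 := by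
  have hsq : Measurable fun x : E ↦ ‖x‖ ^ 2 := by fun_prop
  have hvar := variance_sum_le_of_mem_Icc (Y := fun i ω ↦ ‖X i ω‖ ^ 2) (a := 0) (b := b ^ 2)
    (fun i ↦ (hsq.comp (hmeas i)).aemeasurable) (fun i j hij ↦ (hindep hij).comp hsq hsq)
    (fun i ω ↦ ⟨sq_nonneg _, by gcongr; exact hnorm i ω⟩) s
  rw [variance_eq_integral (by fun_prop)] at hvar
  simp only [Finset.sum_apply] at hvar
  refine hvar.trans ?_
  gcongr
  nlinarith [sq_nonneg (b ^ 2)]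

lemma memLp_sum_norm_sq {X : ι → Ω → E} {b : ℝ} (hmeas : ∀ i, Measurable (X i))
    (hnorm : ∀ i ω, ‖X i ω‖ ≤ b) (s : Finset ι) : MemLp (fun ω ↦ ∑ i ∈ s, ‖X i ω‖ ^ 2) 2 P :=
  memLp_finsetSum _ fun i _ ↦ memLp_of_bounded (a := 0) (b := b ^ 2)
    (.of_forall fun ω ↦ ⟨sq_nonneg _, by gcongr; exact hnorm i ω⟩)
    ((hmeas i).norm.pow_const 2).aestronglyMeasurable 2

lemma ratio_error_le {a b m σ : ℝ} (ha : 0 < a) (hab : a ≤ b) (hm : 0 < m) (hσ : 0 ≤ σ) :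
    2 / (a * m) ^ 3 * (m ^ 2 * σ * (2 * m ^ 3 * b * σ) + m ^ 2 * σ * (m * b ^ 2)) +
        4 / (a * m) ^ 4 * (2 * m ^ 3 * b * σ) ^ 2 ≤
      20 * b ^ 2 / a ^ 4 * (b * σ + m ^ 2 * σ ^ 2) := by
  have hb : 0 < b := ha.trans_le hab
  have hcube : 2 / a ^ 3 ≤ 2 * b / a ^ 4 := by
    rw [div_le_div_iff₀ (by positivity) (by positivity)]
    nlinarith [pow_pos ha 3]
  calc _ = 2 / a ^ 3 * (2 * m ^ 2 * b * σ ^ 2 + b ^ 2 * σ) +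
          16 * (m ^ 2 * b ^ 2 * σ ^ 2) / a ^ 4 := by
        field_simp
        ring
    _ ≤ 2 * b / a ^ 4 * (2 * m ^ 2 * b * σ ^ 2 + b ^ 2 * σ) +
          16 * (m ^ 2 * b ^ 2 * σ ^ 2) / a ^ 4 := by gcongr
    _ = 20 * b ^ 2 / a ^ 4 * (b * σ + m ^ 2 * σ ^ 2) - 18 * b ^ 3 * σ / a ^ 4 := by
        field_simp
        ring
    _ ≤ _ := sub_le_self _ (by positivity)

variable [SecondCountableTopology E]

lemma memLp_norm_sum_sq_sub_sum_norm_sq {X : ι → Ω → E} {b : ℝ}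
    (hmeas : ∀ i, Measurable (X i)) (hnorm : ∀ i ω, ‖X i ω‖ ≤ b) (s : Finset ι) :
    MemLp (fun ω ↦ ‖∑ i ∈ s, X i ω‖ ^ 2 - ∑ i ∈ s, ‖X i ω‖ ^ 2) 2 P := by
  have hS : MemLp (fun ω ↦ ‖∑ i ∈ s, X i ω‖ ^ 2) 2 P :=
    memLp_of_bounded (a := 0) (b := (s.card • b) ^ 2) (.of_forall fun ω ↦ ⟨sq_nonneg _, by
      gcongr
      exact (norm_sum_le _ _).trans (Finset.sum_le_card_nsmul _ _ _ fun i _ ↦ hnorm i ω)⟩)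
      (by fun_prop) 2
  exact hS.sub (memLp_sum_norm_sq hmeas hnorm s)

variable [InnerProductSpace ℝ E] [CompleteSpace E]

lemma integral_norm_sum_sq_sub_sum_norm_sq_sq_le_of_norm_le {X : ι → Ω → E} {v b : ℝ}
    {s : Finset ι} (hmeas : ∀ i, Measurable (X i)) (hindep : iIndepFun X P)
    (hnorm : ∀ i ω, ‖X i ω‖ ≤ b) (hv : 0 ≤ v)
    (hcov : ∀ i w, ∫ ω, ⟪w, X i ω⟫ ^ 2 ∂P ≤ v * ‖w‖ ^ 2) (hsv : s.card * v ≤ b ^ 2) :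
    ∫ ω, (‖∑ i ∈ s, X i ω‖ ^ 2 - ∑ i ∈ s, ‖X i ω‖ ^ 2) ^ 2 ∂P ≤ 2 * s.card ^ 3 * b ^ 2 * v := by
  have hX : ∀ i, MemLp (X i) 2 P := fun i ↦
    .of_bound (hmeas i).aestronglyMeasurable b (.of_forall (hnorm i))
  have hsq : ∀ i, ∫ ω, ‖X i ω‖ ^ 2 ∂P ≤ b ^ 2 := fun i ↦ by
    simpa using integral_mono ((hX i).integrable_norm_pow two_ne_zero)
      (integrable_const (b ^ 2)) fun ω ↦ pow_le_pow_left₀ (norm_nonneg _) (hnorm i ω) 2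
  calc _ ≤ s.card ^ 2 * (v * (s.card * b ^ 2 + s.card ^ 2 * v)) :=
        integral_norm_sum_sq_sub_sum_norm_sq_sq_le hmeas hX hindep hv hcov hsq (sq_nonneg b) s
    _ = s.card ^ 3 * v * (b ^ 2 + s.card * v) := by ring
    _ ≤ s.card ^ 3 * v * (b ^ 2 + b ^ 2) := by gcongr
    _ = 2 * s.card ^ 3 * b ^ 2 * v := by ring

theorem abs_integral_inner_sum_div_norm_sub_le {X : ι → Ω → E} {a b σ : ℝ} {g : E} {s : Finset ι}
    (hmeas : ∀ i, Measurable (X i)) (hindep : iIndepFun X P) (ha : 0 < a) (hσ : 0 ≤ σ)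
    (hnorm : ∀ i ω, ‖X i ω‖ ∈ Icc a b) (hcov : ∀ i w, ∫ ω, ⟪w, X i ω⟫ ^ 2 ∂P ≤ σ ^ 2 * ‖w‖ ^ 2)
    (hg : ‖g‖ = 1) (hs : s.Nonempty) (hsσ : s.card * σ ^ 2 ≤ b ^ 2) :
    |∫ ω, ⟪g, ∑ i ∈ s, X i ω⟫ / ‖∑ i ∈ s, X i ω‖ ∂P -
        (∫ ω, ⟪g, ∑ i ∈ s, X i ω⟫ ∂P) / √(∫ ω, ∑ i ∈ s, ‖X i ω‖ ^ 2 ∂P)| ≤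
      20 * b ^ 2 / a ^ 4 * (b * σ + s.card * σ ^ 2) := by
  obtain ⟨ω₀⟩ := nonempty_of_isProbabilityMeasure P
  have hab : a ≤ b := (hnorm hs.choose ω₀).1.trans (hnorm _ _).2
  have hb : 0 < b := ha.trans_le hab
  have hbd : ∀ i ω, ‖X i ω‖ ≤ b := fun i ω ↦ (hnorm i ω).2
  have hpair : Pairwise fun i j ↦ X i ⟂ᵢ[P] X j := fun _ _ h ↦ hindep.indepFun h
  have hX : ∀ i, MemLp (X i) 2 P := fun i ↦
    .of_bound (hmeas i).aestronglyMeasurable b (.of_forall (hbd i))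
  have hD := memLp_sum_norm_sq (P := P) hmeas hbd s
  obtain ⟨m, hm, hsm⟩ : ∃ m : ℝ, 0 < m ∧ (s.card : ℝ) = m ^ 2 :=
    ⟨√s.card, sqrt_pos.2 (by exact_mod_cast hs.card_pos), (sq_sqrt (Nat.cast_nonneg _)).symm⟩
  have hDlower : ∀ ω, (a * m) ^ 2 ≤ ∑ i ∈ s, ‖X i ω‖ ^ 2 := fun ω ↦
    calc (a * m) ^ 2 = s.card • a ^ 2 := by rw [nsmul_eq_mul, hsm]; ring
      _ ≤ _ := Finset.card_nsmul_le_sum _ _ _ fun i _ ↦ by gcongr; exact (hnorm i ω).1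
  have hmean : (a * m) ^ 2 ≤ ∫ ω, ∑ i ∈ s, ‖X i ω‖ ^ 2 ∂P := by
    simpa using integral_mono (integrable_const _) (hD.integrable one_le_two) hDlower
  have hNα : ∫ ω, ⟪g, ∑ i ∈ s, X i ω⟫ ^ 2 ∂P ≤ (m ^ 2 * σ) ^ 2 :=
    (integral_inner_sum_sq_le hX hcov s g).trans_eq <| by rw [hg, hsm]; ring
  have hTτ : ∫ ω, (‖∑ i ∈ s, X i ω‖ ^ 2 - ∑ i ∈ s, ‖X i ω‖ ^ 2) ^ 2 ∂P ≤
      (2 * m ^ 3 * b * σ) ^ 2 :=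
    (integral_norm_sum_sq_sub_sum_norm_sq_sq_le_of_norm_le hmeas hindep hbd (sq_nonneg σ) hcov
      hsσ).trans <| by rw [hsm]; nlinarith [sq_nonneg (m ^ 3 * b * σ)]
  have hVδ : ∫ ω, (∑ i ∈ s, ‖X i ω‖ ^ 2 - √(∫ ω, ∑ i ∈ s, ‖X i ω‖ ^ 2 ∂P) ^ 2) ^ 2 ∂P ≤
      (m * b ^ 2) ^ 2 := by
    rw [sq_sqrt ((sq_nonneg _).trans hmean)]
    exact (integral_sum_norm_sq_sub_integral_sq_le hmeas hpair hbd s).trans_eq <| by rw [hsm]; ring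
  refine (abs_integral_div_sub_integral_div_le (by positivity) (le_sqrt_of_sq_le hmean) hDlower
    (fun ω ↦ by simpa [hg] using abs_real_inner_le_norm g (∑ i ∈ s, X i ω)) (by fun_prop)
    ((memLp_finsetSum s fun i _ ↦ hX i).const_inner g)
    (memLp_norm_sum_sq_sub_sum_norm_sq hmeas hbd s) (hD.sub (memLp_const _)) (by positivity)
    (by positivity) (by positivity) hNα hTτ hVδ).trans ?_
  rw [hsm]
  exact ratio_error_le ha hab hm hσ

end ExpectedCosine

lemma mul_integral_max_zero_le_setIntegral {Ω : Type*} [MeasurableSpace Ω] {P : Measure Ω}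
    [IsProbabilityMeasure P] {f : Ω → ℝ} {s p : ℝ} (hf : Integrable f P)
    (hmeas : MeasurableSet {ω | s ≤ f ω}) (hs : 0 ≤ s) (hp : 0 ≤ p)
    (hps : p ≤ P.real {ω | s ≤ f ω}) :
    p * ∫ ω, max (f ω) 0 ∂P ≤ (1 + p) * ∫ ω in {ω | s ≤ f ω}, f ω ∂P := by
  set A := {ω | s ≤ f ω}
  have hmarkov : s * p ≤ ∫ ω in A, f ω ∂P :=
    calc s * p ≤ s * P.real A := by gcongr
      _ ≤ ∫ ω in A, f ω ∂P :=
        setIntegral_ge_of_const_le_real hmeas (measure_ne_top _ _) (fun _ h ↦ h) hf.integrableOn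
  have hpos : ∫ ω, max (f ω) 0 ∂P ≤ ∫ ω in A, f ω ∂P + s :=
    calc ∫ ω, max (f ω) 0 ∂P ≤ ∫ ω, (A.indicator f ω + s) ∂P := by
          refine integral_mono hf.pos_part ((hf.indicator hmeas).add (integrable_const s))
            fun ω ↦ max_le ?_ ?_
          · by_cases h : ω ∈ A
            · simp [h, hs]
            · simpa [h] using (not_le.1 h).le
          · by_cases h : ω ∈ A
            · simpa [h] using add_nonneg (hs.trans h) hs
            · simpa [h] using hs
      _ = ∫ ω in A, f ω ∂P + s := by
          rw [integral_add (hf.indicator hmeas) (integrable_const s), integral_indicator hmeas]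
          simp
  nlinarith

lemma integral_pi_sum_comp_eval {α : Type*} [MeasurableSpace α] {P : Measure α}
    [IsProbabilityMeasure P] {n : ℕ} {f : α → ℝ} (hf : Integrable f P) :
    ∫ ω : Fin n → α, ∑ i, f (ω i) ∂Measure.pi (fun _ ↦ P) = n * ∫ x, f x ∂P := by
  have heval : ∀ i, ∫ ω : Fin n → α, f (ω i) ∂Measure.pi (fun _ ↦ P) = ∫ x, f x ∂P := fun _ ↦
    integral_comp_eval hf.aestronglyMeasurable
  rw [integral_finsetSum _ fun i _ ↦ integrable_comp_eval hf]
  simp [heval]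

section Sphere

variable {d : ℕ}

local notation "𝔼" => EuclideanSpace ℝ (Fin d)
local notation "𝕊" => sphere (0 : EuclideanSpace ℝ (Fin d)) 1

instance isProbabilityMeasure_sphereUniform [NeZero d] : IsProbabilityMeasure (sphereUniform d) :=
  have : NeZero (volume : Measure 𝔼).toSphere := ⟨Measure.toSphere_ne_zero _⟩
  inferInstanceAs (IsProbabilityMeasure
    (((volume : Measure 𝔼).toSphere univ)⁻¹ • (volume : Measure 𝔼).toSphere))

/-- The self-map of the unit sphere induced by a linear isometry `R` of the ambient space. -/
noncomputable def sphereRotation (R : 𝔼 ≃ₗᵢ[ℝ] 𝔼) (u : 𝕊) : 𝕊 := ⟨R u, by simp⟩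

lemma continuous_sphereRotation (R : 𝔼 ≃ₗᵢ[ℝ] 𝔼) : Continuous (sphereRotation R) := by
  unfold sphereRotation
  fun_prop

open Pointwise in
lemma smul_image_preimage_sphereRotation (R : 𝔼 ≃ₗᵢ[ℝ] 𝔼) (t : Set 𝕊) :
    Ioo (0 : ℝ) 1 • ((↑) '' (sphereRotation R ⁻¹' t) : Set 𝔼) =
      R ⁻¹' (Ioo (0 : ℝ) 1 • ((↑) '' t : Set 𝔼)) := by
  ext x
  simp only [Set.mem_smul, Set.mem_image, Set.mem_preimage]
  constructor
  · rintro ⟨r, hr, _, ⟨u, hu, rfl⟩, rfl⟩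
    exact ⟨r, hr, R u, ⟨_, hu, rfl⟩, (R.map_smul r _).symm⟩
  · rintro ⟨r, hr, _, ⟨u, hu, rfl⟩, hx⟩
    refine ⟨r, hr, R.symm u, ⟨sphereRotation R.symm u, ?_, rfl⟩, R.injective (by simpa using hx)⟩
    rwa [show sphereRotation R (sphereRotation R.symm u) = u from
      Subtype.ext (R.apply_symm_apply _)]

lemma measurePreserving_sphereRotation (R : 𝔼 ≃ₗᵢ[ℝ] 𝔼) :
    MeasurePreserving (sphereRotation R) (sphereUniform d) (sphereUniform d) := by
  have hR := (continuous_sphereRotation R).measurable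
  refine MeasurePreserving.smul_measure ⟨hR, ?_⟩ _
  ext t ht
  rw [Measure.map_apply hR ht, Measure.toSphere_apply' _ ht, Measure.toSphere_apply' _ (hR ht),
    smul_image_preimage_sphereRotation]
  exact congrArg _ (R.measurePreserving.measure_preimage_equiv (f := R.toMeasurableEquiv) _)

lemma integral_comp_inner_eq_of_norm_eq {F : ℝ → ℝ} (hF : Continuous F) {v w : 𝔼}
    (h : ‖v‖ = ‖w‖) :
    ∫ u : 𝕊, F ⟪v, (u : 𝔼)⟫ ∂sphereUniform d = ∫ u : 𝕊, F ⟪w, (u : 𝔼)⟫ ∂sphereUniform d := by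
  let R : 𝔼 ≃ₗᵢ[ℝ] 𝔼 := (ℝ ∙ (v - w))ᗮ.reflection
  have hRv : R v = w := Submodule.reflection_sub h
  have hR := measurePreserving_sphereRotation R
  have hcont : Continuous fun u : 𝕊 ↦ F ⟪w, (u : 𝔼)⟫ := by fun_prop
  calc ∫ u : 𝕊, F ⟪v, (u : 𝔼)⟫ ∂sphereUniform d
      = ∫ u : 𝕊, F ⟪w, (sphereRotation R u : 𝔼)⟫ ∂sphereUniform d := by
        simp only [sphereRotation, ← hRv, R.inner_map_map]
    _ = ∫ u : 𝕊, F ⟪w, (u : 𝔼)⟫ ∂(sphereUniform d).map (sphereRotation R) :=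
        (integral_map hR.measurable.aemeasurable hcont.aestronglyMeasurable).symm
    _ = ∫ u : 𝕊, F ⟪w, (u : 𝔼)⟫ ∂sphereUniform d := by rw [hR.map_eq]

lemma integral_inner_sphereUniform (v : 𝔼) : ∫ u : 𝕊, ⟪v, (u : 𝔼)⟫ ∂sphereUniform d = 0 := by
  have h := integral_comp_inner_eq_of_norm_eq continuous_id (norm_neg v).symm
  simp only [id, inner_neg_left, integral_neg] at h
  linarith

lemma integral_inner_pow_sphereUniform {e : 𝔼} (he : ‖e‖ = 1) (v : 𝔼) (k : ℕ) :
    ∫ u : 𝕊, ⟪v, (u : 𝔼)⟫ ^ k ∂sphereUniform d =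
      ‖v‖ ^ k * ∫ u : 𝕊, ⟪e, (u : 𝔼)⟫ ^ k ∂sphereUniform d := by
  have hv : ‖v‖ = ‖‖v‖ • e‖ := by rw [norm_smul, he, mul_one, norm_norm]
  rw [integral_comp_inner_eq_of_norm_eq (continuous_pow k) hv]
  simp only [real_inner_smul_left, mul_pow, integral_const_mul]

section Moments

variable [NeZero d]

lemma integrable_sphereUniform {F : 𝕊 → ℝ} (hF : Continuous F) : Integrable F (sphereUniform d) :=
  hF.integrable_of_hasCompactSupport (.of_compactSpace F)

lemma integral_inner_sq_sphereUniform (v : 𝔼) :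
    ∫ u : 𝕊, ⟪v, (u : 𝔼)⟫ ^ 2 ∂sphereUniform d = ‖v‖ ^ 2 / d := by
  let b := EuclideanSpace.basisFun (Fin d) ℝ
  have hd : (d : ℝ) ≠ 0 := NeZero.ne _
  rw [eq_div_iff hd, mul_comm]
  calc d * ∫ u : 𝕊, ⟪v, (u : 𝔼)⟫ ^ 2 ∂sphereUniform d
      = ∑ i, ‖v‖ ^ 2 * ∫ u : 𝕊, ⟪b i, (u : 𝔼)⟫ ^ 2 ∂sphereUniform d := by
        simp [← integral_inner_pow_sphereUniform (b.norm_eq_one _)]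
    _ = ‖v‖ ^ 2 * ∫ u : 𝕊, ∑ i, ⟪b i, (u : 𝔼)⟫ ^ 2 ∂sphereUniform d := by
        rw [integral_finsetSum _ fun i _ ↦ integrable_sphereUniform (by fun_prop), Finset.mul_sum]
    _ = ‖v‖ ^ 2 := by simp [b.sum_sq_inner_right]

lemma integral_inner_sq_mul_inner_sq_sphereUniform {e : 𝔼} (he : ‖e‖ = 1) (v w : 𝔼) :
    3 * ∫ u : 𝕊, ⟪v, (u : 𝔼)⟫ ^ 2 * ⟪w, (u : 𝔼)⟫ ^ 2 ∂sphereUniform d =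
      (‖v‖ ^ 2 * ‖w‖ ^ 2 + 2 * ⟪v, w⟫ ^ 2) * ∫ u : 𝕊, ⟪e, (u : 𝔼)⟫ ^ 4 ∂sphereUniform d := by
  have hpolar : ∀ u : 𝕊, ⟪v, (u : 𝔼)⟫ ^ 2 * ⟪w, (u : 𝔼)⟫ ^ 2 =
      12⁻¹ * (⟪v + w, (u : 𝔼)⟫ ^ 4 + ⟪v - w, (u : 𝔼)⟫ ^ 4 - 2 * ⟪v, (u : 𝔼)⟫ ^ 4
        - 2 * ⟪w, (u : 𝔼)⟫ ^ 4) := fun u ↦ by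
    rw [inner_add_left, inner_sub_left]
    ring
  have hint : ∀ x : 𝔼, Integrable (fun u : 𝕊 ↦ ⟪x, (u : 𝔼)⟫ ^ 4) (sphereUniform d) := fun x ↦
    integrable_sphereUniform (by fun_prop)
  have hadd : Integrable (fun u : 𝕊 ↦ ⟪v + w, (u : 𝔼)⟫ ^ 4 + ⟪v - w, (u : 𝔼)⟫ ^ 4)
      (sphereUniform d) := (hint _).add (hint _)
  have hsub : Integrable (fun u : 𝕊 ↦ ⟪v + w, (u : 𝔼)⟫ ^ 4 + ⟪v - w, (u : 𝔼)⟫ ^ 4 -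
      2 * ⟪v, (u : 𝔼)⟫ ^ 4) (sphereUniform d) := hadd.sub ((hint v).const_mul 2)
  simp only [hpolar]
  rw [integral_const_mul, integral_sub hsub ((hint w).const_mul 2),
    integral_sub hadd ((hint v).const_mul 2), integral_add (hint _) (hint _), integral_const_mul,
    integral_const_mul]
  rw [integral_inner_pow_sphereUniform he (v + w), integral_inner_pow_sphereUniform he (v - w),
    integral_inner_pow_sphereUniform he v, integral_inner_pow_sphereUniform he w,
    show ‖v + w‖ ^ 4 = (‖v + w‖ ^ 2) ^ 2 by ring, show ‖v - w‖ ^ 4 = (‖v - w‖ ^ 2) ^ 2 by ring,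
    norm_add_sq_real, norm_sub_sq_real]
  ring

lemma integral_inner_pow_four_sphereUniform {v : 𝔼} (hv : ‖v‖ = 1) :
    ∫ u : 𝕊, ⟪v, (u : 𝔼)⟫ ^ 4 ∂sphereUniform d = 3 / (d * (d + 2)) := by
  let b := EuclideanSpace.basisFun (Fin d) ℝ
  have hd : (0 : ℝ) < d := by exact_mod_cast NeZero.pos d
  set M := ∫ u : 𝕊, ⟪v, (u : 𝔼)⟫ ^ 4 ∂sphereUniform d with hM
  have h : 3 * (1 / (d : ℝ)) = (d + 2) * M :=
    calc 3 * (1 / (d : ℝ))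
        = 3 * ∫ u : 𝕊, ⟪v, (u : 𝔼)⟫ ^ 2 * ∑ i, ⟪b i, (u : 𝔼)⟫ ^ 2 ∂sphereUniform d := by
          simp [b.sum_sq_inner_right, integral_inner_sq_sphereUniform, hv]
      _ = ∑ i, 3 * ∫ u : 𝕊, ⟪v, (u : 𝔼)⟫ ^ 2 * ⟪b i, (u : 𝔼)⟫ ^ 2 ∂sphereUniform d := by
          simp only [Finset.mul_sum]
          rw [integral_finsetSum _ fun i _ ↦ integrable_sphereUniform (by fun_prop),
            Finset.mul_sum]
      _ = ∑ i, (1 + 2 * ⟪v, b i⟫ ^ 2) * M := by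
          simp only [integral_inner_sq_mul_inner_sq_sphereUniform hv, hv, b.norm_eq_one]
          simp [hM]
      _ = (d + 2) * M := by
          rw [← Finset.sum_mul, Finset.sum_add_distrib, ← Finset.mul_sum, b.sum_sq_inner_left, hv]
          simp
  rw [eq_div_iff (by positivity)]
  field_simp at h
  linarith

lemma sq_sub_pow_four_div_six_le {t : ℝ} (ht : 0 ≤ t) : t ^ 2 - t ^ 4 / 6 ≤ t := by
  have h : t - t ^ 3 / 6 ≤ 1 := by
    nlinarith [mul_nonneg ht (sq_nonneg (t - 3 / 2)), sq_nonneg (t - 3 / 2), sq_nonneg (t - 1)]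
  nlinarith

-- Applied to `t = √d * |⟪v, u⟫|`, the inequality `t ^ 2 - t ^ 4 / 6 ≤ t` bounds the first absolute
-- moment from below by the second and fourth ones.
lemma le_integral_abs_inner_sphereUniform {v : 𝔼} (hv : ‖v‖ = 1) :
    1 / (2 * √d) ≤ ∫ u : 𝕊, |⟪v, (u : 𝔼)⟫| ∂sphereUniform d := by
  have hd : (0 : ℝ) < d := by exact_mod_cast NeZero.pos d
  have hr : 0 < √(d : ℝ) := sqrt_pos.2 hd
  have hpt : ∀ x : ℝ, d * x ^ 2 - d ^ 2 / 6 * x ^ 4 ≤ √d * |x| := fun x ↦ by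
    have h := sq_sub_pow_four_div_six_le (t := √d * |x|) (by positivity)
    rw [mul_pow, mul_pow, sq_sqrt hd.le, show √(d : ℝ) ^ 4 = (√(d : ℝ) ^ 2) ^ 2 by ring,
      sq_sqrt hd.le, sq_abs, Even.pow_abs (by decide)] at h
    linarith
  have h2 : Integrable (fun u : 𝕊 ↦ d * ⟪v, (u : 𝔼)⟫ ^ 2) (sphereUniform d) :=
    integrable_sphereUniform (by fun_prop)
  have h4 : Integrable (fun u : 𝕊 ↦ (d : ℝ) ^ 2 / 6 * ⟪v, (u : 𝔼)⟫ ^ 4) (sphereUniform d) :=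
    integrable_sphereUniform (by fun_prop)
  rw [← div_div, div_le_iff₀' hr, one_div]
  calc (2 : ℝ)⁻¹ ≤ 1 - d / (2 * (d + 2)) := by
        rw [le_sub_iff_add_le]
        field_simp
        linarith
    _ = ∫ u : 𝕊, (d * ⟪v, (u : 𝔼)⟫ ^ 2 - (d : ℝ) ^ 2 / 6 * ⟪v, (u : 𝔼)⟫ ^ 4) ∂sphereUniform d := by
        rw [integral_sub h2 h4, integral_const_mul, integral_const_mul,
          integral_inner_sq_sphereUniform, integral_inner_pow_four_sphereUniform hv, hv]
        field_simp
        ring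
    _ ≤ ∫ u : 𝕊, √d * |⟪v, (u : 𝔼)⟫| ∂sphereUniform d :=
        integral_mono (h2.sub h4) (integrable_sphereUniform (by fun_prop)) fun u ↦ hpt _
    _ = √d * ∫ u : 𝕊, |⟪v, (u : 𝔼)⟫| ∂sphereUniform d := integral_const_mul _ _

lemma integral_max_neg_inner_sphereUniform (v : 𝔼) :
    ∫ u : 𝕊, max (-⟪v, (u : 𝔼)⟫) 0 ∂sphereUniform d =
      (∫ u : 𝕊, |⟪v, (u : 𝔼)⟫| ∂sphereUniform d) / 2 := by
  have h : ∀ x : ℝ, max (-x) 0 = (|x| - x) / 2 := fun x ↦ by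
    rcases le_total 0 x with hx | hx
    · rw [abs_of_nonneg hx, max_eq_right (neg_nonpos.2 hx)]; ring
    · rw [abs_of_nonpos hx, max_eq_left (neg_nonneg.2 hx)]; ring
  simp only [h]
  rw [integral_div, integral_sub (integrable_sphereUniform (by fun_prop))
    (integrable_sphereUniform (by fun_prop)), integral_inner_sphereUniform, sub_zero]

end Moments

section Weight

variable {s β : ℝ}

lemma measurable_phiHat (g : 𝔼) : Measurable (phiHat d g s β) :=
  .ite (measurableSet_lt measurable_const (by fun_prop)) measurable_const measurable_const

lemma abs_phiHat_mem_Icc (g : 𝔼) (u : 𝕊) :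
    |phiHat d g s β u| ∈ Icc (min |1 - β| |β|) (max |1 - β| |β|) := by
  unfold phiHat
  split_ifs <;> simp

lemma phiHat_sq_mem_Icc (g : 𝔼) (u : 𝕊) :
    phiHat d g s β u ^ 2 ∈ Icc (min |1 - β| |β| ^ 2) (max |1 - β| |β| ^ 2) := by
  have h := abs_phiHat_mem_Icc g (s := s) (β := β) u
  rw [← sq_abs (phiHat d g s β u)]
  exact ⟨pow_le_pow_left₀ (by positivity) h.1 2, pow_le_pow_left₀ (abs_nonneg _) h.2 2⟩

lemma phiHat_mul_inner (g : 𝔼) (u : 𝕊) :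
    phiHat d g s β u * ⟪g, (u : 𝔼)⟫ = (1 - β) * ⟪g, (u : 𝔼)⟫ +
      {u : 𝕊 | s ≤ -⟪g, (u : 𝔼)⟫}.indicator (fun u ↦ -⟪g, (u : 𝔼)⟫) u := by
  by_cases h : -s < ⟪g, (u : 𝔼)⟫
  · simp [phiHat, h, le_neg]
  · rw [phiHat, if_neg h, indicator_of_mem (by simpa [le_neg] using h)]
    ring

variable [NeZero d]

lemma integral_phiHat_mul_inner (g : 𝔼) :
    ∫ u : 𝕊, phiHat d g s β u * ⟪g, (u : 𝔼)⟫ ∂sphereUniform d =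
      ∫ u : 𝕊 in {u | s ≤ -⟪g, (u : 𝔼)⟫}, -⟪g, (u : 𝔼)⟫ ∂sphereUniform d := by
  have hcap : MeasurableSet {u : 𝕊 | s ≤ -⟪g, (u : 𝔼)⟫} :=
    measurableSet_le measurable_const (by fun_prop)
  have hint : Integrable (fun u : 𝕊 ↦ -⟪g, (u : 𝔼)⟫) (sphereUniform d) :=
    integrable_sphereUniform (by fun_prop)
  simp only [phiHat_mul_inner]
  rw [integral_add (integrable_sphereUniform (by fun_prop)) (hint.indicator hcap),
    integral_const_mul, integral_inner_sphereUniform, mul_zero, zero_add, integral_indicator hcap]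

lemma le_integral_phiHat_mul_inner {g : 𝔼} {q : ℝ} (hg : ‖g‖ = 1) (hs : 0 ≤ s) (hq : q ≤ 1)
    (hcap : (sphereUniform d).real {u : 𝕊 | -s ≤ ⟪g, (u : 𝔼)⟫} ≤ q) :
    (1 - q) / (4 * (2 - q)) / √d ≤
      ∫ u : 𝕊, phiHat d g s β u * ⟪g, (u : 𝔼)⟫ ∂sphereUniform d := by
  have htail : 1 - q ≤ (sphereUniform d).real {u : 𝕊 | s ≤ -⟪g, (u : 𝔼)⟫} := by
    have hmeas : MeasurableSet {u : 𝕊 | -s < ⟪g, (u : 𝔼)⟫} :=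
      measurableSet_lt measurable_const (by fun_prop)
    have hcompl : {u : 𝕊 | s ≤ -⟪g, (u : 𝔼)⟫} = {u : 𝕊 | -s < ⟪g, (u : 𝔼)⟫}ᶜ := by
      ext u
      simp [le_neg]
    rw [hcompl, probReal_compl_eq_one_sub hmeas]
    have hle : (sphereUniform d).real {u : 𝕊 | -s < ⟪g, (u : 𝔼)⟫} ≤
        (sphereUniform d).real {u : 𝕊 | -s ≤ ⟪g, (u : 𝔼)⟫} :=
      measureReal_mono (ofPred_subset_ofPred.2 fun _ ↦ le_of_lt)
    linarith
  have h := mul_integral_max_zero_le_setIntegral (integrable_sphereUniform (by fun_prop))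
    (measurableSet_le measurable_const (by fun_prop)) hs (sub_nonneg.2 hq) htail
  rw [integral_max_neg_inner_sphereUniform, ← integral_phiHat_mul_inner g (β := β)] at h
  have habs := le_integral_abs_inner_sphereUniform hg
  have hq2 : 0 < 2 - q := by linarith
  calc (1 - q) / (4 * (2 - q)) / √d = (1 - q) * (1 / (2 * √d) / 2) / (2 - q) := by
        field_simp
        norm_num
    _ ≤ (1 - q) * ((∫ u : 𝕊, |⟪g, (u : 𝔼)⟫| ∂sphereUniform d) / 2) / (2 - q) := by
        have := sub_nonneg.2 hq
        gcongr
    _ ≤ _ := by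
        rw [div_le_iff₀' hq2]
        linarith

lemma integral_inner_phiHat_smul_sq_le (g w : 𝔼) :
    ∫ u : 𝕊, ⟪w, phiHat d g s β u • (u : 𝔼)⟫ ^ 2 ∂sphereUniform d ≤
      (max |1 - β| |β| / √d) ^ 2 * ‖w‖ ^ 2 :=
  calc _ ≤ ∫ u : 𝕊, max |1 - β| |β| ^ 2 * ⟪w, (u : 𝔼)⟫ ^ 2 ∂sphereUniform d := by
        refine integral_mono_of_nonneg (.of_forall fun u ↦ sq_nonneg _)
          (integrable_sphereUniform (by fun_prop)) (.of_forall fun u ↦ ?_)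
        simp only
        rw [real_inner_smul_right, mul_pow]
        exact mul_le_mul_of_nonneg_right (phiHat_sq_mem_Icc g u).2 (sq_nonneg _)
    _ = (max |1 - β| |β| / √d) ^ 2 * ‖w‖ ^ 2 := by
        rw [integral_const_mul, integral_inner_sq_sphereUniform, div_pow, sq_sqrt d.cast_nonneg]
        ring

lemma integrable_phiHat_sq (g : 𝔼) :
    Integrable (fun u ↦ phiHat d g s β u ^ 2) (sphereUniform d) :=
  .of_mem_Icc _ _ ((measurable_phiHat g).pow_const 2).aemeasurable
    (.of_forall (phiHat_sq_mem_Icc g))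

lemma integral_phiHat_sq_mem_Icc (g : 𝔼) :
    ∫ u, phiHat d g s β u ^ 2 ∂sphereUniform d ∈
      Icc (min |1 - β| |β| ^ 2) (max |1 - β| |β| ^ 2) := by
  constructor
  · simpa using integral_mono (integrable_const _) (integrable_phiHat_sq g) fun u ↦
      (phiHat_sq_mem_Icc g u).1
  · simpa using integral_mono (integrable_phiHat_sq g) (integrable_const _) fun u ↦
      (phiHat_sq_mem_Icc g u).2

end Weight

section Estimator

/-- The expected cosine similarity `μ_d` of `g` with the estimator `Ghat` from `n` samples. The
junk value `x / 0 = 0` makes the integrand vanish where the estimator does. -/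
noncomputable def expectedCosine (d n : ℕ) (g : EuclideanSpace ℝ (Fin d)) (s β : ℝ) : ℝ :=
  ∫ ω : Fin n → sphere (0 : EuclideanSpace ℝ (Fin d)) 1,
    ⟪g, Ghat d n g s β ω⟫ / ‖Ghat d n g s β ω‖ ∂Measure.pi fun _ : Fin n ↦ sphereUniform d

/-- The closed-form surrogate objective `J_d` for `expectedCosine d n g s β`. -/
noncomputable def surrogateCosine (d n : ℕ) (g : EuclideanSpace ℝ (Fin d)) (s β : ℝ) : ℝ :=
  √n * (∫ u, phiHat d g s β u * ⟪g, (u : EuclideanSpace ℝ (Fin d))⟫ ∂sphereUniform d) /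
    √(∫ u, phiHat d g s β u ^ 2 ∂sphereUniform d)

variable {n : ℕ} {s β : ℝ}

lemma inner_Ghat_div_norm_Ghat [NeZero n] (g : 𝔼) (ω : Fin n → 𝕊) :
    ⟪g, Ghat d n g s β ω⟫ / ‖Ghat d n g s β ω‖ =
      ⟪g, ∑ i, phiHat d g s β (ω i) • (ω i : 𝔼)⟫ / ‖∑ i, phiHat d g s β (ω i) • (ω i : 𝔼)‖ := by
  have hn : 0 < 1 / (n : ℝ) := one_div_pos.2 (by exact_mod_cast NeZero.pos n)
  rw [Ghat, real_inner_smul_right, norm_smul, norm_of_nonneg hn.le, mul_div_mul_left _ _ hn.ne']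

variable [NeZero d]

lemma surrogateCosine_eq_div_sqrt (g : 𝔼) :
    surrogateCosine d n g s β =
      (∫ ω : Fin n → 𝕊, ⟪g, ∑ i, phiHat d g s β (ω i) • (ω i : 𝔼)⟫
          ∂Measure.pi fun _ ↦ sphereUniform d) /
        √(∫ ω : Fin n → 𝕊, ∑ i, ‖phiHat d g s β (ω i) • (ω i : 𝔼)‖ ^ 2
          ∂Measure.pi fun _ ↦ sphereUniform d) := by
  have hmean : Integrable (fun u ↦ phiHat d g s β u * ⟪g, (u : 𝔼)⟫) (sphereUniform d) :=
    (integrable_sphereUniform (by fun_prop)).bdd_mul (measurable_phiHat g).aestronglyMeasurable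
      (.of_forall fun u ↦ (abs_phiHat_mem_Icc g u).2)
  simp only [inner_sum, real_inner_smul_right, norm_smul, norm_eq_of_mem_sphere, mul_one,
    norm_eq_abs, sq_abs]
  rw [integral_pi_sum_comp_eval hmean, integral_pi_sum_comp_eval (integrable_phiHat_sq g),
    sqrt_mul n.cast_nonneg, surrogateCosine]
  rcases eq_or_ne (n : ℝ) 0 with hn | hn
  · simp [hn]
  · field_simp
    rw [sq_sqrt n.cast_nonneg, mul_comm]

lemma abs_expectedCosine_sub_surrogateCosine_le [NeZero n] {g : 𝔼} (hg : ‖g‖ = 1) (hβ0 : β ≠ 0)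
    (hβ1 : β ≠ 1) (hnd : n ≤ d) :
    |expectedCosine d n g s β - surrogateCosine d n g s β| ≤
      20 * max |1 - β| |β| ^ 4 / min |1 - β| |β| ^ 4 * (1 / √d + n / d) := by
  set a := min |1 - β| |β|
  set b := max |1 - β| |β|
  have ha : 0 < a := lt_min (abs_pos.2 (sub_ne_zero.2 hβ1.symm)) (abs_pos.2 hβ0)
  have hd : (0 : ℝ) < d := by exact_mod_cast NeZero.pos d
  let X : 𝕊 → 𝔼 := fun u ↦ phiHat d g s β u • (u : 𝔼)
  have hX : Measurable X := (measurable_phiHat g).smul measurable_subtype_coe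
  have hnorm : ∀ u, ‖X u‖ ∈ Icc a b := fun u ↦ by
    rw [norm_smul, norm_eq_of_mem_sphere, mul_one]
    exact abs_phiHat_mem_Icc g u
  have hcov : ∀ (i : Fin n) (w : 𝔼), ∫ ω : Fin n → 𝕊, ⟪w, X (ω i)⟫ ^ 2
      ∂Measure.pi (fun _ ↦ sphereUniform d) ≤ (b / √d) ^ 2 * ‖w‖ ^ 2 := fun i w ↦
    (integral_comp_eval (X := fun _ : Fin n ↦ 𝕊) (f := fun u ↦ ⟪w, X u⟫ ^ 2) (by fun_prop)).trans_le
      (integral_inner_phiHat_smul_sq_le g w)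
  have hσ : (n : ℝ) * (b / √d) ^ 2 ≤ b ^ 2 := by
    rw [div_pow, sq_sqrt hd.le, mul_div_left_comm]
    exact mul_le_of_le_one_right (sq_nonneg b) (div_le_one_of_le₀ (by exact_mod_cast hnd) hd.le)
  have h := abs_integral_inner_sum_div_norm_sub_le (s := Finset.univ)
    (X := fun (i : Fin n) (ω : Fin n → 𝕊) ↦ X (ω i)) (fun i ↦ by fun_prop)
    (iIndepFun_pi fun _ ↦ hX.aemeasurable) ha (by positivity) (fun i ω ↦ hnorm (ω i)) hcov hg
    Finset.univ_nonempty (by simpa using hσ)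
  simp only [expectedCosine, inner_Ghat_div_norm_Ghat, surrogateCosine_eq_div_sqrt]
  refine h.trans_eq ?_
  rw [Finset.card_fin, div_pow, sq_sqrt hd.le]
  ring

lemma le_surrogateCosine {g : 𝔼} {q : ℝ} (hg : ‖g‖ = 1) (hs : 0 ≤ s) (hq : q ≤ 1)
    (hcap : (sphereUniform d).real {u : 𝕊 | -s ≤ ⟪g, (u : 𝔼)⟫} ≤ q) (hβ0 : β ≠ 0) (hβ1 : β ≠ 1) :
    (1 - q) / (4 * (2 - q)) / max |1 - β| |β| * √(n / d) ≤ surrogateCosine d n g s β := by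
  have ha : 0 < min |1 - β| |β| := lt_min (abs_pos.2 (sub_ne_zero.2 hβ1.symm)) (abs_pos.2 hβ0)
  obtain ⟨hlower, hupper⟩ := integral_phiHat_sq_mem_Icc g (s := s) (β := β)
  have hpos : 0 < √(∫ u, phiHat d g s β u ^ 2 ∂sphereUniform d) :=
    sqrt_pos.2 ((pow_pos ha 2).trans_le hlower)
  have hle : √(∫ u, phiHat d g s β u ^ 2 ∂sphereUniform d) ≤ max |1 - β| |β| :=
    sqrt_le_iff.2 ⟨by positivity, hupper⟩
  have hm := le_integral_phiHat_mul_inner (β := β) hg hs hq hcap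
  have hκ : 0 ≤ (1 - q) / (4 * (2 - q)) / √d :=
    div_nonneg (div_nonneg (by linarith) (by linarith)) (sqrt_nonneg _)
  have hm0 := hκ.trans hm
  calc (1 - q) / (4 * (2 - q)) / max |1 - β| |β| * √(n / d)
      = √n * ((1 - q) / (4 * (2 - q)) / √d) / max |1 - β| |β| := by
        rw [sqrt_div n.cast_nonneg]
        ring
    _ ≤ √n * (∫ u : 𝕊, phiHat d g s β u * ⟪g, (u : 𝔼)⟫ ∂sphereUniform d) /
          √(∫ u, phiHat d g s β u ^ 2 ∂sphereUniform d) := by gcongr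

lemma abs_expectedCosine_div_surrogateCosine_sub_one_le [NeZero n] {g : 𝔼} {q : ℝ} (hg : ‖g‖ = 1)
    (hs : 0 ≤ s) (hq : q < 1) (hcap : (sphereUniform d).real {u : 𝕊 | -s ≤ ⟪g, (u : 𝔼)⟫} ≤ q)
    (hβ0 : β ≠ 0) (hβ1 : β ≠ 1) (hnd : n ≤ d) :
    |expectedCosine d n g s β / surrogateCosine d n g s β - 1| ≤
      20 * max |1 - β| |β| ^ 4 / min |1 - β| |β| ^ 4 /
        ((1 - q) / (4 * (2 - q)) / max |1 - β| |β|) * (1 / √n + √(n / d)) := by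
  have herr := abs_expectedCosine_sub_surrogateCosine_le (s := s) hg hβ0 hβ1 hnd
  have hJ := le_surrogateCosine (n := n) hg hs hq.le hcap hβ0 hβ1
  have hb : 0 < max |1 - β| |β| := lt_max_of_lt_right (abs_pos.2 hβ0)
  set C := 20 * max |1 - β| |β| ^ 4 / min |1 - β| |β| ^ 4
  have hκ : 0 < (1 - q) / (4 * (2 - q)) / max |1 - β| |β| :=
    div_pos (div_pos (by linarith) (by linarith)) hb
  set κ := (1 - q) / (4 * (2 - q)) / max |1 - β| |β|
  have hn : 0 < √(n : ℝ) := sqrt_pos.2 (by exact_mod_cast NeZero.pos n)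
  have hd : 0 < √(d : ℝ) := sqrt_pos.2 (by exact_mod_cast NeZero.pos d)
  rw [sqrt_div n.cast_nonneg] at hJ ⊢
  have hJ0 : 0 < surrogateCosine d n g s β := lt_of_lt_of_le (by positivity) hJ
  calc |expectedCosine d n g s β / surrogateCosine d n g s β - 1|
      = |expectedCosine d n g s β - surrogateCosine d n g s β| / surrogateCosine d n g s β := by
        rw [div_sub_one hJ0.ne', abs_div, abs_of_pos hJ0]
    _ ≤ C * (1 / √d + n / d) / (κ * (√n / √d)) := by gcongr
    _ = C * (1 / √d + √n ^ 2 / √d ^ 2) / (κ * (√n / √d)) := by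
        rw [sq_sqrt n.cast_nonneg, sq_sqrt d.cast_nonneg]
    _ = C / κ * (1 / √n + √n / √d) := by field_simp

end Estimator

end Sphere

section SampleSize

variable {d : ℕ} [NeZero d] {z : ℝ}

lemma rpow_le_sqrt_ceil_rpow : (d : ℝ) ^ z ≤ √⌈(d : ℝ) ^ (3 * z)⌉₊ := by
  have hd1 : (1 : ℝ) ≤ d := by exact_mod_cast NeZero.one_le
  have hd0 : (0 : ℝ) < d := by linarith
  have hceil := Nat.le_ceil ((d : ℝ) ^ (3 * z))
  apply le_sqrt_of_sq_le
  rw [← rpow_mul_natCast hd0.le]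
  rcases le_total 0 z with hz | hz
  · exact (rpow_le_rpow_of_exponent_le hd1 (by push_cast; linarith)).trans hceil
  · calc (d : ℝ) ^ (z * (2 : ℕ)) ≤ 1 :=
          rpow_le_one_of_one_le_of_nonpos hd1 (by push_cast; linarith)
      _ ≤ ⌈(d : ℝ) ^ (3 * z)⌉₊ := by exact_mod_cast Nat.ceil_pos.2 (rpow_pos_of_pos hd0 _)

lemma sqrt_ceil_rpow_div_le (hz : z ≤ 1 / 5) :
    √(⌈(d : ℝ) ^ (3 * z)⌉₊ / d) ≤ 2 * (d : ℝ) ^ (-z) := by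
  have hd1 : (1 : ℝ) ≤ d := by exact_mod_cast NeZero.one_le
  have hd0 : (0 : ℝ) < d := by linarith
  have hpow : ((d : ℝ) ^ (-z)) ^ 2 = (d : ℝ) ^ (-2 * z) := by
    rw [← rpow_mul_natCast hd0.le]
    ring_nf
  refine sqrt_le_iff.2 ⟨by positivity, ?_⟩
  calc (⌈(d : ℝ) ^ (3 * z)⌉₊ : ℝ) / d ≤ ((d : ℝ) ^ (3 * z) + 1) / d := by
        gcongr
        exact (Nat.ceil_lt_add_one (by positivity)).le
    _ = (d : ℝ) ^ (3 * z - 1) + (d : ℝ) ^ (-1 : ℝ) := by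
        rw [add_div, rpow_sub_one hd0.ne', rpow_neg_one, one_div]
    _ ≤ (d : ℝ) ^ (-2 * z) + (d : ℝ) ^ (-2 * z) := by
        gcongr <;> linarith
    _ ≤ (2 * (d : ℝ) ^ (-z)) ^ 2 := by
        rw [mul_pow, hpow]
        linarith [rpow_pos_of_pos hd0 (-2 * z)]

lemma ceil_rpow_le_self (hz : z ≤ 1 / 3) : ⌈(d : ℝ) ^ (3 * z)⌉₊ ≤ d := by
  have hd1 : (1 : ℝ) ≤ d := by exact_mod_cast NeZero.one_le
  refine Nat.ceil_le.2 ?_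
  simpa using rpow_le_rpow_of_exponent_le hd1 (show 3 * z ≤ 1 by linarith)

end SampleSize

theorem expected_cosine_similarity_approx_general {z q β : ℝ} (hz : z ≤ 1 / 5) (hq : q < 1)
    (hβ0 : β ≠ 0) (hβ1 : β ≠ 1) :
    ∃ K : ℝ, 0 < K ∧ ∀ (d : ℕ) [NeZero d] (g : EuclideanSpace ℝ (Fin d)) (s : ℝ), ‖g‖ = 1 →
      0 ≤ s →
      (sphereUniform d).real {u | -s ≤ ⟪g, (u : EuclideanSpace ℝ (Fin d))⟫} ≤ q →
      |expectedCosine d ⌈(d : ℝ) ^ (3 * z)⌉₊ g s β /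
          surrogateCosine d ⌈(d : ℝ) ^ (3 * z)⌉₊ g s β - 1| ≤ K * (d : ℝ) ^ (-z) := by
  have ha : 0 < min |1 - β| |β| := lt_min (abs_pos.2 (sub_ne_zero.2 hβ1.symm)) (abs_pos.2 hβ0)
  have : 0 < max |1 - β| |β| := ha.trans_le min_le_max
  have : 0 < (1 - q) / (4 * (2 - q)) := div_pos (by linarith) (by linarith)
  refine ⟨20 * max |1 - β| |β| ^ 4 / min |1 - β| |β| ^ 4 /
    ((1 - q) / (4 * (2 - q)) / max |1 - β| |β|) * 3, by positivity, fun d _ g s hg hs hcap ↦ ?_⟩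
  have hd : (0 : ℝ) < d := by exact_mod_cast NeZero.pos d
  have : NeZero ⌈(d : ℝ) ^ (3 * z)⌉₊ := ⟨(Nat.ceil_pos.2 (rpow_pos_of_pos hd _)).ne'⟩
  refine (abs_expectedCosine_div_surrogateCosine_sub_one_le hg hs hq hcap hβ0 hβ1
    (ceil_rpow_le_self (by linarith))).trans ?_
  rw [mul_assoc]
  gcongr
  have hinv : 1 / √⌈(d : ℝ) ^ (3 * z)⌉₊ ≤ (d : ℝ) ^ (-z) := by
    rw [rpow_neg hd.le, ← one_div]
    gcongr
    exact rpow_le_sqrt_ceil_rpow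
  linarith [sqrt_ceil_rpow_div_le (d := d) hz]

/-- **Theorem 2 (Expected Cosine Similarity Approximation).** Fix
`z ∈ (0,1/8)`, `q ∈ [1/2,1)`, `β ∈ (1/2,1)`. For each `d ≥ 2` choose the cap
threshold `s d ∈ [0,1)` with `P[⟨g,u⟩ ≥ −s d] = q`, take `n_d = ⌈d^(3z)⌉`
i.i.d. uniform samples, and let `μ d = E[⟨g,Ĝ⟩/‖Ĝ‖]` and
`J d = √n_d·E[φ̂(u₁)⟨g,u₁⟩]/√(E[φ̂(u₁)²])`. Then there are `K > 0` and `D₀`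
such that `|μ d / J d − 1| ≤ K·d^(−z)` for all `d ≥ D₀`. -/
theorem expected_cosine_similarity_approx
    (z q β : ℝ) (hz : z ∈ Set.Ioo (0 : ℝ) (1/8))
    (hq : q ∈ Set.Ico (1/2 : ℝ) 1) (hβ : β ∈ Set.Ioo (1/2 : ℝ) 1)
    (g : ∀ d : ℕ, EuclideanSpace ℝ (Fin d)) (s : ℕ → ℝ) (μ J : ℕ → ℝ)
    (hg : ∀ d : ℕ, 2 ≤ d → ‖g d‖ = 1)
    (hs : ∀ d : ℕ, 2 ≤ d → s d ∈ Set.Ico (0 : ℝ) 1)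
    (hcap : ∀ d : ℕ, 2 ≤ d →
      (sphereUniform d {u : (sphere (0 : EuclideanSpace ℝ (Fin d)) 1) |
          -(s d) ≤ ⟪g d, (u : EuclideanSpace ℝ (Fin d))⟫}).toReal = q)
    (hμ : ∀ d : ℕ, 2 ≤ d →
      μ d = ∫ ω : Fin (⌈(d : ℝ) ^ (3 * z)⌉₊) → (sphere (0 : EuclideanSpace ℝ (Fin d)) 1),
          (⟪g d, Ghat d (⌈(d : ℝ) ^ (3 * z)⌉₊) (g d) (s d) β ω⟫ /
            ‖Ghat d (⌈(d : ℝ) ^ (3 * z)⌉₊) (g d) (s d) β ω‖)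
          ∂(Measure.pi (fun _ : Fin (⌈(d : ℝ) ^ (3 * z)⌉₊) => sphereUniform d)))
    (hJ : ∀ d : ℕ, 2 ≤ d →
      J d = Real.sqrt (⌈(d : ℝ) ^ (3 * z)⌉₊ : ℝ)
          * (∫ u, phiHat d (g d) (s d) β u * ⟪g d, (u : EuclideanSpace ℝ (Fin d))⟫
              ∂(sphereUniform d))
          / Real.sqrt (∫ u, (phiHat d (g d) (s d) β u) ^ 2 ∂(sphereUniform d))) :
    ∃ K : ℝ, 0 < K ∧ ∃ D₀ : ℕ, ∀ d : ℕ, D₀ ≤ d →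
      |μ d / J d - 1| ≤ K * (d : ℝ) ^ (-z) := by
  obtain ⟨K, hK, h⟩ := expected_cosine_similarity_approx_general (z := z) (by linarith [hz.2]) hq.2
    (by linarith [hβ.1] : 0 < β).ne' hβ.2.ne
  refine ⟨K, hK, 2, fun d hd ↦ ?_⟩
  have : NeZero d := ⟨by lia⟩
  rw [hμ d hd, hJ d hd]
  exact h d (g d) (s d) (hg d hd) (hs d hd).1 (hcap d hd).le
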